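/- If W_k is the effective pseudoscalar of a bivector B in ℝ_{p,q,r} and ±μ₁, …, ±μ_k ∈ ℂ are the roots (with multiplicity) of its characteristic polynomial P_{2k}, then W_k² = μ₁² μ₂² ⋯ μ_k², the product of all the squared eigenvalues of B. -/

import Mathlib

/-! Common setup: the real geometric algebra `ℝ_{p,q,r}`, grade projections `⟨·⟩_ℓ`,
the commutator product `×`, the wedge powers `W_j`, the outer exponential and outer
trigonometric functions, the characteristic polynomial data `M_μ`, and the
complexification `ℂ ⊗ ℝ_{p,q,r}`. -/

noncomputable section

open CliffordAlgebra TensorProduct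

/-- The diagonal quadratic form of signature `(p,q,r)` on `ℝⁿ`, `n = p+q+r`:
`p` basis vectors of square `+1`, `q` of square `-1`, `r` of square `0`.
`ℝ_{p,q,r} := CliffordAlgebra (sigQ p q r)`. -/
def sigQ (p q r : ℕ) : QuadraticForm ℝ (Fin (p + q + r) → ℝ) :=
  QuadraticMap.weightedSumSquares ℝ
    (fun i : Fin (p + q + r) => if (i : ℕ) < p then (1 : ℝ) else if (i : ℕ) < p + q then -1 else 0)

variable {K : Type*} [Field K] [CharZero K] {M : Type*} [AddCommGroup M] [Module K M]

/-- The grade-`ℓ` component `⟨x⟩_ℓ` of an element of a Clifford algebra, obtained by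
transporting the grading of the exterior algebra along `CliffordAlgebra.equivExterior`. -/
def gradeProj (Q : QuadraticForm K M) (ℓ : ℕ) (x : CliffordAlgebra Q) : CliffordAlgebra Q :=
  letI : Invertible (2 : K) := invertibleOfNonzero two_ne_zero
  (equivExterior Q).symm
    (DirectSum.decompose (fun n : ℕ => ⋀[K]^n M) (equivExterior Q x) ℓ : ExteriorAlgebra K M)

/-- `x` is homogeneous of grade `ℓ`; in particular `IsGrade Q 2 B` says `B` is a bivector. -/
def IsGrade (Q : QuadraticForm K M) (ℓ : ℕ) (x : CliffordAlgebra Q) : Prop :=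
  gradeProj Q ℓ x = x

/-- The commutator product `x × y := (xy - yx)/2`. -/
def cprod {Q : QuadraticForm K M} (x y : CliffordAlgebra Q) : CliffordAlgebra Q :=
  (2 : K)⁻¹ • (x * y - y * x)

/-- `W_j := (1/j!) ⟨B^j⟩_{2j}`, the normalized `j`-fold wedge power of `B`. -/
def Wj (Q : QuadraticForm K M) (B : CliffordAlgebra Q) (j : ℕ) : CliffordAlgebra Q :=
  ((j.factorial : K)⁻¹) • gradeProj Q (2 * j) (B ^ j)

/-- `B` has effective dimension `2k`: `k` is the largest integer with `W_k ≠ 0`. -/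
def HasEffDim (Q : QuadraticForm K M) (B : CliffordAlgebra Q) (k : ℕ) : Prop :=
  Wj Q B k ≠ 0 ∧ ∀ j, k < j → Wj Q B j = 0

/-- The outer exponential `Λ^B = Σ_{j≥0} W_j`; `n` is any bound beyond which all the `W_j`
vanish (e.g. the dimension of the underlying space), so the sum is complete. -/
def outerExp (Q : QuadraticForm K M) (n : ℕ) (B : CliffordAlgebra Q) : CliffordAlgebra Q :=
  ∑ j ∈ Finset.range (n + 1), Wj Q B j

/-- The outer cosine `co∧(B) := (Λ^B + Λ^{-B})/2`. -/
def coW (Q : QuadraticForm K M) (n : ℕ) (B : CliffordAlgebra Q) : CliffordAlgebra Q :=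
  (2 : K)⁻¹ • (outerExp Q n B + outerExp Q n (-B))

/-- The outer sine `si∧(B) := (Λ^B - Λ^{-B})/2`. -/
def siW (Q : QuadraticForm K M) (n : ℕ) (B : CliffordAlgebra Q) : CliffordAlgebra Q :=
  (2 : K)⁻¹ • (outerExp Q n B - outerExp Q n (-B))

/-- `M_μ := Σ_{j=0}^k (-μ)^{k-j} W_j`; the characteristic polynomial of `B` is
`P_{2k}(μ) = M_μ * reverse M_μ`. -/
def Mpoly (Q : QuadraticForm K M) (B : CliffordAlgebra Q) (k : ℕ) (μ : K) : CliffordAlgebra Q :=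
  ∑ j ∈ Finset.range (k + 1), (-μ) ^ (k - j) • Wj Q B j

/-- The wedge (outer) product, `X ∧ Y := ⟨XY⟩_{i+j}` on homogeneous elements of grades `i`, `j`,
extended bilinearly; `n` bounds the occurring grades. -/
def wedgeProd (Q : QuadraticForm K M) (n : ℕ) (x y : CliffordAlgebra Q) : CliffordAlgebra Q :=
  ∑ i ∈ Finset.range (n + 1), ∑ j ∈ Finset.range (n + 1),
    gradeProj Q (i + j) (gradeProj Q i x * gradeProj Q j y)

/-- The dot product of two vectors, `u · v = ⟨uv⟩₀ = polar(Q)(u,v)/2`, as a scalar. -/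
def vdot (Q : QuadraticForm K M) (u v : M) : K := (2 : K)⁻¹ * QuadraticMap.polar Q u v

/-- The complexified quadratic form of signature `(p,q,r)`. -/
def sigQc (p q r : ℕ) : QuadraticForm ℂ (ℂ ⊗[ℝ] (Fin (p + q + r) → ℝ)) :=
  letI : Invertible (2 : ℝ) := invertibleOfNonzero two_ne_zero
  (sigQ p q r).baseChange ℂ

/-- The canonical embedding of `ℝ_{p,q,r}` into its complexification `ℂ ⊗ ℝ_{p,q,r}`. -/
def toC (p q r : ℕ) (x : CliffordAlgebra (sigQ p q r)) : CliffordAlgebra (sigQc p q r) :=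
  letI : Invertible (2 : ℝ) := invertibleOfNonzero two_ne_zero
  ofBaseChange ℂ (sigQ p q r) ((1 : ℂ) ⊗ₜ x)

/-- `v` is an eigenvector of the bivector `B` with eigenvalue `μ`: `v ≠ 0` and `B × v = μ v`. -/
def IsEigen (Q : QuadraticForm K M) (B : CliffordAlgebra Q) (μ : K) (v : M) : Prop :=
  v ≠ 0 ∧ cprod B (ι Q v) = μ • ι Q v

end

/-! At `μ = 0` only the top term of `M_μ` survives, so `P_{2k}(0) = W_k W̃_k`, whereas the roots
give `P_{2k}(0) = (-1)ᵏ μ₁² ⋯ μ_k²`. It remains to see that `W̃_k = (-1)ᵏ W_k`, as for any element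
of grade `2k`. In the exterior algebra, reversal acts on grade `n` by the sign
`(-1) ^ (n choose 2)`. The identification with the Clifford algebra commutes with reversal: reversal
turns the left contractions by a bilinear form `B` that define it into right contractions by the
transpose of `B`, left and right contractions commute, and here `B` is symmetric. -/

namespace GeometricAlgebra

open CliffordAlgebra

section Contraction

variable {R V : Type*} [CommRing R] [AddCommGroup V] [Module R V]
  {Q Q' : QuadraticForm R V} {B : LinearMap.BilinForm R V}

theorem contractLeft_mul (d : Module.Dual R V) (x y : CliffordAlgebra Q) :
    contractLeft d (x * y) = contractLeft d x * y + involute x * contractLeft d y := by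
  induction x using CliffordAlgebra.left_induction with
  | algebraMap r =>
    rw [contractLeft_algebraMap_mul, contractLeft_algebraMap, AlgHom.commutes, zero_mul, zero_add]
  | add x x' hx hx' => simp only [add_mul, map_add, hx, hx', add_add_add_comm]
  | ι_mul x a hx =>
    rw [mul_assoc, contractLeft_ι_mul, hx, contractLeft_ι_mul, map_mul, involute_ι, mul_add,
      sub_mul, smul_mul_assoc, neg_mul, neg_mul, mul_assoc, mul_assoc]
    abel

theorem contractRight_mul (d : Module.Dual R V) (x y : CliffordAlgebra Q) :
    contractRight (x * y) d = x * contractRight y d + contractRight x d * involute y := by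
  simp only [contractRight_eq, reverse.map_mul, contractLeft_mul, map_add, reverse_involute,
    reverse_reverse, add_comm]

theorem contractRight_ι_mul (d : Module.Dual R V) (a : V) (x : CliffordAlgebra Q) :
    contractRight (ι Q a * x) d = ι Q a * contractRight x d + d a • involute x := by
  rw [contractRight_mul, contractRight_ι, Algebra.smul_def]

theorem contractLeft_involute (d : Module.Dual R V) (x : CliffordAlgebra Q) :
    contractLeft d (involute x) = -involute (contractLeft d x) := by
  induction x using CliffordAlgebra.left_induction with
  | algebraMap r => simp
  | add x y hx hy => simp only [map_add, hx, hy, neg_add]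
  | ι_mul x a hx =>
    simp only [map_mul, involute_ι, neg_mul, map_neg, contractLeft_ι_mul, hx, map_sub, map_smul,
      mul_neg]

theorem contractLeft_contractRight (d d' : Module.Dual R V) (x : CliffordAlgebra Q) :
    contractLeft d (contractRight x d') = contractRight (contractLeft d x) d' := by
  induction x using CliffordAlgebra.left_induction with
  | algebraMap r => simp
  | add x y hx hy => simp only [map_add, LinearMap.add_apply, hx, hy]
  | ι_mul x a hx =>
    simp only [contractRight_ι_mul, contractLeft_ι_mul, contractLeft_involute, hx, map_add, map_sub,
      map_smul, LinearMap.sub_apply, LinearMap.smul_apply, smul_neg]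
    abel

theorem changeForm_mul_ι (h : B.toQuadraticMap = Q' - Q) (x : CliffordAlgebra Q) (a : V) :
    changeForm h (x * ι Q a)
      = changeForm h x * ι Q' a - contractRight (changeForm h x) (B.flip a) := by
  induction x using CliffordAlgebra.left_induction with
  | algebraMap r =>
    rw [changeForm_algebraMap, contractRight_algebraMap, ← Algebra.smul_def, ← Algebra.smul_def,
      map_smul, changeForm_ι, sub_zero]
  | add x y hx hy => simp only [add_mul, map_add, LinearMap.add_apply, hx, hy, add_sub_add_comm]
  | ι_mul x b hx =>
    simp only [mul_assoc, changeForm_ι_mul, hx, map_sub, LinearMap.sub_apply, contractLeft_mul,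
      contractLeft_ι, ← Algebra.commutes, ← Algebra.smul_def, contractLeft_contractRight,
      contractRight_ι_mul, LinearMap.BilinForm.flip_apply, mul_sub, sub_mul]
    abel

theorem toQuadraticMap_flip (B : LinearMap.BilinForm R V) :
    B.flip.toQuadraticMap = B.toQuadraticMap := by
  ext a
  simp

theorem reverse_changeForm (h : B.toQuadraticMap = Q' - Q) (x : CliffordAlgebra Q) :
    reverse (changeForm h x) = changeForm ((toQuadraticMap_flip B).trans h) (reverse x) := by
  induction x using CliffordAlgebra.left_induction with
  | algebraMap r => simp
  | add x y hx hy => simp only [map_add, hx, hy]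
  | ι_mul x a hx =>
    have hflip : B.flip.flip a = B a := rfl
    rw [changeForm_ι_mul, map_sub, reverse.map_mul, reverse.map_mul, reverse_ι, reverse_ι,
      changeForm_mul_ι, hflip, contractRight_eq, ← hx, reverse_reverse]

theorem reverse_changeForm_of_isSymm (h : B.toQuadraticMap = Q' - Q) (hB : B.IsSymm)
    (x : CliffordAlgebra Q) :
    reverse (changeForm h x) = changeForm h (reverse x) := by
  have hflip : B.flip = B := LinearMap.BilinForm.isSymm_iff_flip.mp hB
  simpa only [hflip] using reverse_changeForm h x

theorem reverse_equivExterior_symm [Invertible (2 : R)] (x : ExteriorAlgebra R V) :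
    reverse ((equivExterior Q).symm x)
      = (equivExterior Q).symm (reverse (Q := (0 : QuadraticForm R V)) x) :=
  reverse_changeForm_of_isSymm (changeForm.neg_proof changeForm.associated_neg_proof)
    (LinearMap.BilinForm.isSymm_neg.mpr ⟨QuadraticMap.associated_isSymm R (-Q)⟩) x

end Contraction

section ExteriorPower

variable {R V : Type*} [CommRing R] [AddCommGroup V] [Module R V] {n : ℕ} {x : ExteriorAlgebra R V}

theorem mul_ι_of_mem_exteriorPower (hx : x ∈ ⋀[R]^n V) (a : V) :
    x * ExteriorAlgebra.ι R a = (-1 : R) ^ n • (ExteriorAlgebra.ι R a * x) := by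
  induction hx using Submodule.pow_induction_on_left' with
  | algebraMap r => rw [pow_zero, one_smul, Algebra.commutes]
  | add x y i _ _ hx hy => rw [add_mul, hx, hy, mul_add, smul_add]
  | mem_mul m hm i x _ ih =>
    obtain ⟨b, rfl⟩ := hm
    have hswap : ExteriorAlgebra.ι R b * ExteriorAlgebra.ι R a
        = -(ExteriorAlgebra.ι R a * ExteriorAlgebra.ι R b) :=
      eq_neg_of_add_eq_zero_left (ExteriorAlgebra.ι_add_mul_swap b a)
    rw [mul_assoc, ih, mul_smul_comm, ← mul_assoc, ← mul_assoc, hswap, pow_succ, mul_smul,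
      neg_one_smul, neg_mul]

theorem reverse_of_mem_exteriorPower (hx : x ∈ ⋀[R]^n V) :
    reverse (Q := 0) x = (-1 : R) ^ n.choose 2 • x := by
  induction hx using Submodule.pow_induction_on_left' with
  | algebraMap r => simp
  | add x y i _ _ hx hy => rw [map_add, hx, hy, smul_add]
  | mem_mul m hm i x hx ih =>
    obtain ⟨b, rfl⟩ := hm
    calc reverse (Q := (0 : QuadraticForm R V)) (ExteriorAlgebra.ι R b * x)
        = reverse (Q := (0 : QuadraticForm R V)) x * ExteriorAlgebra.ι R b := by
          rw [reverse.map_mul, ExteriorAlgebra.ι, reverse_ι]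
      _ = (-1 : R) ^ i.choose 2 • (-1 : R) ^ i • (ExteriorAlgebra.ι R b * x) := by
          rw [ih, smul_mul_assoc, mul_ι_of_mem_exteriorPower hx]
      _ = (-1 : R) ^ (i + 1).choose 2 • (ExteriorAlgebra.ι R b * x) := by
          rw [smul_smul, ← pow_add, Nat.choose_succ_succ' i 1, Nat.choose_one_right, add_comm]

end ExteriorPower

theorem neg_one_pow_two_mul_choose_two {R : Type*} [Monoid R] [HasDistribNeg R] (k : ℕ) :
    (-1 : R) ^ (2 * k).choose 2 = (-1) ^ k := by
  cases k with
  | zero => simp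
  | succ k =>
    have hchoose : (2 * (k + 1)).choose 2 = (2 * k + 1) * (k + 1) := by
      rw [Nat.choose_two_right]
      refine Nat.div_eq_of_eq_mul_right two_pos ?_
      simp only [Nat.mul_succ, Nat.add_succ_sub_one]
      ring
    rw [hchoose, pow_mul, (odd_two_mul_add_one k).neg_one_pow]

section CharacteristicPolynomial

variable {K V : Type*} [Field K] [CharZero K] [AddCommGroup V] [Module K V]
  (Q : QuadraticForm K V) (B : CliffordAlgebra Q)

theorem reverse_gradeProj (ℓ : ℕ) (x : CliffordAlgebra Q) :
    reverse (gradeProj Q ℓ x) = (-1 : K) ^ ℓ.choose 2 • gradeProj Q ℓ x := by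
  let : Invertible (2 : K) := invertibleOfNonzero two_ne_zero
  rw [gradeProj, reverse_equivExterior_symm, reverse_of_mem_exteriorPower (SetLike.coe_mem _),
    map_smul]

theorem reverse_Wj (j : ℕ) : reverse (Wj Q B j) = (-1 : K) ^ j • Wj Q B j := by
  rw [Wj, map_smul, reverse_gradeProj, neg_one_pow_two_mul_choose_two, smul_comm]

theorem Mpoly_zero (k : ℕ) : Mpoly Q B k 0 = Wj Q B k := by
  have hlower : ∀ j ∈ Finset.range k, (-0 : K) ^ (k - j) • Wj Q B j = 0 := fun j hj => by
    rw [neg_zero, zero_pow (Nat.sub_ne_zero_of_lt (Finset.mem_range.mp hj)), zero_smul]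
  rw [Mpoly, Finset.sum_range_succ, Finset.sum_eq_zero hlower, zero_add, Nat.sub_self, pow_zero,
    one_smul]

theorem Mpoly_zero_mul_reverse (k : ℕ) :
    Mpoly Q B k 0 * reverse (Mpoly Q B k 0) = (-1 : K) ^ k • (Wj Q B k * Wj Q B k) := by
  rw [Mpoly_zero, reverse_Wj, mul_smul_comm]

end CharacteristicPolynomial

end GeometricAlgebra

open CliffordAlgebra GeometricAlgebra in
theorem effPseudoscalar_sq_eq_prod_eigenvalues_sq_general {K V : Type*} [Field K] [CharZero K]
    [AddCommGroup V] [Module K V] (Q : QuadraticForm K V) (B : CliffordAlgebra Q) (k : ℕ)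
    (μs : Fin k → K)
    (hroots : ∀ μ : K, Mpoly Q B k μ * reverse (Mpoly Q B k μ)
      = algebraMap K (CliffordAlgebra Q) (∏ i : Fin k, (μ ^ 2 - μs i ^ 2))) :
    Wj Q B k * Wj Q B k = algebraMap K (CliffordAlgebra Q) (∏ i : Fin k, μs i ^ 2) := by
  have hprod : ∏ i, ((0 : K) ^ 2 - μs i ^ 2) = (-1) ^ k * ∏ i, μs i ^ 2 := by
    simp [Finset.prod_neg]
  have hsigned : (-1 : K) ^ k • (Wj Q B k * Wj Q B k)
      = (-1 : K) ^ k • algebraMap K (CliffordAlgebra Q) (∏ i, μs i ^ 2) := by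
    rw [← Mpoly_zero_mul_reverse, hroots, hprod, map_mul, Algebra.smul_def]
  exact (isUnit_neg_one.pow k).smul_left_cancel.mp hsigned

open CliffordAlgebra in
/-- if `W_k` is the effective pseudoscalar of `B` and `±μ₁, …, ±μ_k` are the
roots (with multiplicity) of its characteristic polynomial, then `W_k² = μ₁²μ₂²⋯μ_k²`. -/
theorem effPseudoscalar_sq_eq_prod_eigenvalues_sq (p q r : ℕ) (B : CliffordAlgebra (sigQ p q r))
    (hB : IsGrade (sigQ p q r) 2 B) (k : ℕ) (hk : HasEffDim (sigQ p q r) B k)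
    (μs : Fin k → ℂ)
    (hroots : ∀ μ : ℂ,
      Mpoly (sigQc p q r) (toC p q r B) k μ * reverse (Mpoly (sigQc p q r) (toC p q r B) k μ)
        = algebraMap ℂ (CliffordAlgebra (sigQc p q r)) (∏ i : Fin k, (μ ^ 2 - μs i ^ 2))) :
    Wj (sigQc p q r) (toC p q r B) k * Wj (sigQc p q r) (toC p q r B) k
      = algebraMap ℂ (CliffordAlgebra (sigQc p q r)) (∏ i : Fin k, μs i ^ 2) :=
  effPseudoscalar_sq_eq_prod_eigenvalues_sq_general _ (toC p q r B) k μs hroots
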